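/- arXiv:2504.18146 — 4 statements merged into one kernel-verified Lean document; each statement's English description precedes it below -/
import Mathlib

section
/- Let V be a finite vertex type, G a simple graph on V, and x, a, b, c vertices with G.Adj x a, G.Adj a b, ¬G.Adj x b, ¬G.Adj a c, x ≠ b, x ≠ c, a ≠ c, and b ≠ c. If the graph G together with the added edge {x, b} has a perfect matching M1, and the graph G together with the added edge {a, c} has a perfect matching M2, then G itself has a perfect matching. -/
namespace SimpleGraph

variable {V : Type*}

theorem ncard_oddComponents_le_of_reachable {W : Type*} [Finite W] {H H' : SimpleGraph W}
    (hle : H ≤ H') (h : ∀ v w, H'.Adj v w → H.Reachable v w) :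
    H.oddComponents.ncard ≤ H'.oddComponents.ncard := by
  have hr : ∀ v w, H'.Reachable v w → H.Reachable v w := by
    rintro v w ⟨p⟩
    induction p with
    | nil => exact Reachable.refl _
    | cons hadj _ ih => exact (h _ _ hadj).trans ih
  refine Set.ncard_le_ncard_of_injOn (fun K => K.map (Hom.ofLE hle)) ?_ ?_ (Set.toFinite _)
  · intro K
    refine K.ind fun v hv => ?_
    have hs : (H'.connectedComponentMk v).supp = (H.connectedComponentMk v).supp := by
      ext w
      simp only [ConnectedComponent.mem_supp_iff, ConnectedComponent.eq]
      exact ⟨hr _ _, fun k => k.mono hle⟩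
    change Odd (H'.connectedComponentMk v).supp.ncard
    rw [hs]
    exact hv
  · intro K _ L _
    refine ConnectedComponent.ind₂ (fun v w hvw => ?_) K L
    exact ConnectedComponent.eq.mpr (hr _ _ (ConnectedComponent.eq.mp hvw))

/-- A Tutte violator stays one after adding edges whose ends are already connected. -/
theorem IsTutteViolator.of_le_of_reachable [Finite V] {G G' : SimpleGraph V} {u : Set V}
    (hG : G.IsTutteViolator u) (hle : G ≤ G')
    (h : ∀ v w : ((⊤ : G.Subgraph).deleteVerts u).verts, G'.Adj v w →
      ((⊤ : G.Subgraph).deleteVerts u).coe.Reachable v w) :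
    G'.IsTutteViolator u := by
  unfold IsTutteViolator at *
  refine lt_of_lt_of_le hG
    (ncard_oddComponents_le_of_reachable (W := ((⊤ : G.Subgraph).deleteVerts u).verts)
      (H' := ((⊤ : G'.Subgraph).deleteVerts u).coe) ?_ ?_)
  · exact Subgraph.deleteVerts_mono' u hle
  · intro v w hvw
    exact h v w (((⊤ : G'.Subgraph).deleteVerts u).adj_sub hvw)

/-- If near-matchings exist for `G` plus edge `{x, b}` and for `G` plus edge `{a, c}`
(with the stated adjacency and distinctness conditions), then `G` has a perfect matching. -/
theorem exists_isPerfectMatching_of_near_matchings [Fintype V] {G : SimpleGraph V}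
    {x a b c : V} {M1 : Subgraph (G ⊔ edge x b)} {M2 : Subgraph (G ⊔ edge a c)}
    (hxa : G.Adj x a) (hab : G.Adj a b) (hnGxb : ¬G.Adj x b) (hnGac : ¬G.Adj a c)
    (hnxb : x ≠ b) (hnxc : x ≠ c) (hnac : a ≠ c) (hnbc : b ≠ c)
    (hM1 : M1.IsPerfectMatching) (hM2 : M2.IsPerfectMatching) :
    ∃ M : G.Subgraph, M.IsPerfectMatching := by
  rw [tutte]
  intro u hu
  have hadj : ∀ v w : ((⊤ : G.Subgraph).deleteVerts u).verts, G.Adj v w →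
      ((⊤ : G.Subgraph).deleteVerts u).coe.Adj v w := by
    rintro ⟨v, hv⟩ ⟨w, hw⟩ hvw
    simp at hv hw hvw
    simp [hv, hw, hvw]
  by_cases ha : a ∈ u
  · refine not_isTutteViolator_of_isPerfectMatching hM2 u
      (hu.of_le_of_reachable le_sup_left ?_)
    intro v w hvw
    rcases hvw with hvw | hvw
    · exact (hadj v w hvw).reachable
    · have hv := v.2.2
      have hw := w.2.2
      rw [edge_adj] at hvw
      rcases hvw.1 with ⟨h1, h2⟩ | ⟨h1, h2⟩
      · exact absurd (h1 ▸ ha) hv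
      · exact absurd (h2 ▸ ha) hw
  · refine not_isTutteViolator_of_isPerfectMatching hM1 u
      (hu.of_le_of_reachable le_sup_left ?_)
    intro v w hvw
    rcases hvw with hvw | hvw
    · exact (hadj v w hvw).reachable
    · let a' : ((⊤ : G.Subgraph).deleteVerts u).verts := ⟨a, trivial, ha⟩
      have hva : G.Adj v a' ∧ G.Adj a' w := by
        rw [edge_adj] at hvw
        rcases hvw.1 with ⟨h1, h2⟩ | ⟨h1, h2⟩
        · rw [h1, h2]; exact ⟨hxa, hab⟩
        · rw [h1, h2]; exact ⟨hab.symm, hxa.symm⟩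
      exact (hadj v a' hva.1).reachable.trans (hadj a' w hva.2).reachable

end SimpleGraph
end

section
/- Let G be a simple graph on a vertex type V, M a subgraph of G that is a perfect matching, and G' a simple graph on V that is alternating with respect to the spanning coercion of M and satisfies IsCycles. Then the top subgraph of the symmetric difference of the spanning coercion of M and G' is a perfect matching of that symmetric difference graph. -/
open scoped symmDiff

namespace SimpleGraph

variable {V : Type*}

/-- Taking the symmetric difference of a perfect matching with an alternating
graph consisting of cycles yields a perfect matching. -/
theorem IsPerfectMatching.symmDiff_of_isAlternating {G G' : SimpleGraph V} {M : G.Subgraph}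
    (hM : M.IsPerfectMatching) (hG' : G'.IsAlternating M.spanningCoe) (hG'cyc : G'.IsCycles) :
    (⊤ : Subgraph (M.spanningCoe ∆ G')).IsPerfectMatching := by
  -- work with plain propositions at a fixed vertex
  have key : ∀ v, ∃! w, (M.Adj v w ∧ ¬ G'.Adj v w) ∨ (G'.Adj v w ∧ ¬ M.Adj v w) := by
    intro v
    obtain ⟨m, hm, hmu⟩ := hM.1 (hM.2 v)
    have alt : ∀ a b, a ≠ b → G'.Adj v a → G'.Adj v b → (M.Adj v a ↔ ¬ M.Adj v b) :=
      fun a b hab ha hb => hG' hab ha hb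
    by_cases hne : (G'.neighborSet v).Nonempty
    · -- the two cycle neighbours of `v`: exactly one of them is the partner `m`
      obtain ⟨a, b, hab, hN⟩ := Set.ncard_eq_two.mp (hG'cyc hne)
      have mem : ∀ x, G'.Adj v x ↔ x = a ∨ x = b := fun x => by
        rw [← SimpleGraph.mem_neighborSet, hN]; simp
      have ha := (mem a).2 (Or.inl rfl)
      have hb := (mem b).2 (Or.inr rfl)
      have hiff := alt a b hab ha hb
      by_cases hma : M.Adj v a
      · have hmb := hiff.1 hma
        refine ⟨b, Or.inr ⟨hb, hmb⟩, ?_⟩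
        rintro y (⟨h1, h2⟩ | ⟨h1, h2⟩)
        · exact absurd (((hmu y h1).trans (hmu a hma).symm) ▸ ha) h2
        · rcases (mem y).1 h1 with rfl | rfl
          · exact absurd hma h2
          · rfl
      · have hmb : M.Adj v b := by tauto
        refine ⟨a, Or.inr ⟨ha, hma⟩, ?_⟩
        rintro y (⟨h1, h2⟩ | ⟨h1, h2⟩)
        · exact absurd (((hmu y h1).trans (hmu b hmb).symm) ▸ hb) h2
        · rcases (mem y).1 h1 with rfl | rfl
          · rfl
          · exact absurd hmb h2
    · -- no cycle through `v`: the partner is unchanged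
      have none : ∀ x, ¬ G'.Adj v x := fun x hx => hne ⟨x, hx⟩
      refine ⟨m, Or.inl ⟨hm, none m⟩, ?_⟩
      rintro y (⟨h1, _⟩ | ⟨h1, _⟩)
      · exact hmu y h1
      · exact absurd h1 (none y)
  rw [Subgraph.isPerfectMatching_iff]
  intro v
  have hadj : ∀ w, (⊤ : Subgraph (M.spanningCoe ∆ G')).Adj v w ↔
      (M.Adj v w ∧ ¬ G'.Adj v w) ∨ (G'.Adj v w ∧ ¬ M.Adj v w) := by
    intro w
    rw [Subgraph.top_adj, symmDiff_def, SimpleGraph.sup_adj, SimpleGraph.sdiff_adj,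
      SimpleGraph.sdiff_adj, Subgraph.spanningCoe_adj]
  exact (existsUnique_congr hadj).2 (key v)

end SimpleGraph
end

section
/- Let G be a simple graph on a vertex type V, M a subgraph of G that is a perfect matching, and U ⊆ V a set of vertices. For every connected component C of the graph obtained from G by deleting U whose vertex set has odd cardinality, there exist a vertex v in C and a vertex w in U such that M.Adj v w. -/
namespace SimpleGraph

variable {V : Type*}

/-- Given a perfect matching of `G` and a vertex set `u`, every odd component of `G`
minus `u` contains a vertex matched to a vertex of `u`. -/
theorem exists_adj_mem_of_odd_component {G : SimpleGraph V} {M : G.Subgraph}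
    (hM : M.IsPerfectMatching) (u : Set V)
    (C : ((⊤ : G.Subgraph).deleteVerts u).coe.ConnectedComponent)
    (hC : Odd C.supp.ncard) :
    ∃ v ∈ C.supp, ∃ w ∈ u, M.Adj v w := by
  by_contra! h
  have hMmatch : (M.induce (Subtype.val '' C.supp)).IsMatching := by
    intro v hv
    obtain ⟨w, hw⟩ := hM.1 (hM.2 v)
    obtain ⟨⟨v', hv'⟩, ⟨hv, rfl⟩⟩ := hv
    use w
    have hwnu : w ∉ u := fun hw' ↦ h ⟨v', hv'⟩ hv w hw' hw.1
    refine ⟨⟨⟨⟨v', hv'⟩, hv, rfl⟩, ?_, hw.1⟩, fun _ hy ↦ hw.2 _ hy.2.2⟩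
    apply ConnectedComponent.mem_coe_supp_of_adj ⟨⟨v', hv'⟩, ⟨hv, rfl⟩⟩ ⟨by trivial, hwnu⟩
    simp only [Subgraph.induce_verts, Subgraph.verts_top, Set.mem_sdiff, Set.mem_univ, true_and,
      Subgraph.induce_adj, hwnu, not_false_eq_true, and_self, Subgraph.top_adj, M.adj_sub hw.1,
      and_true] at hv' ⊢
    trivial
  apply Nat.not_even_iff_odd.2 hC
  have hfin : C.supp.Finite := Set.finite_of_ncard_pos hC.pos
  have hfin2 : (M.induce (Subtype.val '' C.supp)).verts.Finite := hfin.image _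
  have : Fintype ↑(M.induce (Subtype.val '' C.supp)).verts := hfin2.fintype
  have h1 := hMmatch.even_card
  rw [← Set.ncard_eq_toFinset_card'] at h1
  rwa [Subgraph.induce_verts, Set.ncard_image_of_injective _ Subtype.val_injective] at h1

end SimpleGraph
end

section
/- Let V be a vertex type, G1 and G2 simple graphs on V, M1 a subgraph of G1 that is a perfect matching, and M2 a subgraph of G2 that is a perfect matching. Then the symmetric difference of the spanning coercions of M1 and M2 is alternating with respect to the spanning coercion of M2. -/
open scoped symmDiff

namespace SimpleGraph

variable {V : Type*}

/-- The symmetric difference of two perfect matchings is alternating with respect to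
the second matching. -/
theorem symmDiff_spanningCoe_isAlternating {G1 G2 : SimpleGraph V}
    {M1 : G1.Subgraph} {M2 : G2.Subgraph} (hM1 : M1.IsPerfectMatching)
    (hM2 : M2.IsPerfectMatching) :
    (M1.spanningCoe ∆ M2.spanningCoe).IsAlternating M2.spanningCoe := by
  intro v w w' hww' hw hw'
  obtain ⟨a, _, ha⟩ := hM1.1 (hM1.2 v)
  obtain ⟨b, _, hb⟩ := hM2.1 (hM2.2 v)
  have haw := ha w
  have haw' := ha w'
  have hbw := hb w
  have hbw' := hb w'
  simp only [symmDiff_def, sup_adj, sdiff_adj, Subgraph.spanningCoe_adj] at hw hw' haw haw' hbw hbw' ⊢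
  grind

end SimpleGraph
end
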